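/- arXiv:1611.02249 — 2 statements merged into one kernel-verified Lean document; each statement's English description precedes it below -/
import Mathlib

section
/- Let S be Douthett's parsimonious relation P_{1,0} on the 28-element set H of major, minor, and augmented triads. The submonoid of the monoid of binary relations on H generated by S has exactly 7 elements; equivalently, the relations 1, S, S², S³, S⁴, S⁵, S⁶ are pairwise distinct and S⁷ = S⁵. -/
/-! The sum of the pitch classes of a triad takes values in the 12-cycle `ZMod 12`, and `Srel` only
joins triads whose sums are neighbours on this cycle: the fibre over a multiple of 3 is a single
augmented triad, the other fibres consist of three major or three minor triads, and `Srel` is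
complete between neighbouring fibres except between a major and a minor one. Since one of any three
consecutive sums is a multiple of 3, already `Srel ^ 2` relates all pairs of triads whose sums are
joined by a walk of length 2 on the 12-cycle, and the same follows for every `Srel ^ n` with
`2 ≤ n`. On the 12-cycle, walks of length 5 and of length 7 both join exactly the pairs at odd
distance, whereas for `m < n ≤ 6` a point at distance `n` is not reached in `m` steps. -/

/-- The 28-element set of the 24 major and minor triads and the 4 augmented triads:
`Sum.inl n` is the major triad `n_M`, `Sum.inr (Sum.inl n)` is the minor triad `n_m`,
and `Sum.inr (Sum.inr k)` is the augmented triad `k_aug`. -/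
abbrev Htriads : Type := (ZMod 12) ⊕ (ZMod 12) ⊕ (ZMod 4)

/-- Binary relations on `Htriads`. -/
abbrev MRel : Type := Htriads → Htriads → Prop

/-- The monoid of binary relations on `Htriads`: `r * s` relates `x` to `z` iff there is `y`
with `x r y` and `y s z` (i.e. first apply `r`, then `s`), and `1` is the equality relation. -/
instance : Monoid MRel where
  one := fun x y => x = y
  mul := fun r s => fun x z => ∃ y, r x y ∧ s y z
  mul_assoc r s t := by
    funext x z
    apply propext
    constructor
    · rintro ⟨y, ⟨w, hw1, hw2⟩, hy⟩
      exact ⟨w, hw1, y, hw2, hy⟩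
    · rintro ⟨w, hw1, y, hy1, hy2⟩
      exact ⟨y, ⟨w, hw1, hy1⟩, hy2⟩
  one_mul r := by
    funext x z
    apply propext
    constructor
    · rintro ⟨y, rfl, h⟩
      exact h
    · intro h
      exact ⟨x, rfl, h⟩
  mul_one r := by
    funext x z
    apply propext
    constructor
    · rintro ⟨y, h, rfl⟩
      exact h
    · intro h
      exact ⟨z, h, rfl⟩

/-- The major triad on root `n`. -/
def maj (n : ZMod 12) : Htriads := Sum.inl n
/-- The minor triad on root `n`. -/
def mino (n : ZMod 12) : Htriads := Sum.inr (Sum.inl n)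
/-- The augmented triad `k_aug`, `k ∈ ℤ/4`. -/
def aug (k : ZMod 4) : Htriads := Sum.inr (Sum.inr k)

/-- Reduction mod 4 of a pitch class mod 12. -/
def m4 (n : ZMod 12) : ZMod 4 := ZMod.castHom (show (4:ℕ) ∣ 12 by norm_num) (ZMod 4) n

/-- The relation `𝒰`: the symmetric relation relating exactly `n_M` with `(n mod 4)_aug`
and `n_m` with `((n+3) mod 4)_aug`. -/
def Urel : MRel := fun x y =>
  (∃ n : ZMod 12, x = maj n ∧ y = aug (m4 n)) ∨
  (∃ n : ZMod 12, x = aug (m4 n) ∧ y = maj n) ∨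
  (∃ n : ZMod 12, x = mino n ∧ y = aug (m4 (n + 3))) ∨
  (∃ n : ZMod 12, x = aug (m4 (n + 3)) ∧ y = mino n)

/-- The relation `𝒫`: the symmetric relation relating exactly `n_M` with `n_m`,
and each augmented triad with itself. -/
def Prel : MRel := fun x y =>
  (∃ n : ZMod 12, x = maj n ∧ y = mino n) ∨
  (∃ n : ZMod 12, x = mino n ∧ y = maj n) ∨
  (∃ k : ZMod 4, x = aug k ∧ y = aug k)

/-- The relation `ℒ`: the symmetric relation relating exactly `n_M` with `(n+4)_m`,
and each augmented triad with itself. -/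
def Lrel : MRel := fun x y =>
  (∃ n : ZMod 12, x = maj n ∧ y = mino (n + 4)) ∨
  (∃ n : ZMod 12, x = mino (n + 4) ∧ y = maj n) ∨
  (∃ k : ZMod 4, x = aug k ∧ y = aug k)

/-- Douthett's parsimonious relation `𝒮 = P_{1,0}` on major, minor and augmented triads. -/
def Srel : MRel := fun x y =>
  (∃ n : ZMod 12, x = maj n ∧ y = mino n) ∨
  (∃ n : ZMod 12, x = mino n ∧ y = maj n) ∨
  (∃ n : ZMod 12, x = maj n ∧ y = mino (n + 4)) ∨
  (∃ n : ZMod 12, x = mino (n + 4) ∧ y = maj n) ∨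
  (∃ n : ZMod 12, x = maj n ∧ y = aug (m4 n)) ∨
  (∃ n : ZMod 12, x = aug (m4 n) ∧ y = maj n) ∨
  (∃ n : ZMod 12, x = mino n ∧ y = aug (m4 (n + 3))) ∨
  (∃ n : ZMod 12, x = aug (m4 (n + 3)) ∧ y = mino n)

/-- Douthett's parsimonious relation `𝒯 = P_{2,0}` on major, minor and augmented triads. -/
def Trel : MRel := fun x y =>
  (∃ n : ZMod 12, x = maj n ∧ y = maj (n + 4)) ∨
  (∃ n : ZMod 12, x = maj n ∧ y = maj (n + 8)) ∨
  (∃ n : ZMod 12, x = maj n ∧ y = mino (n + 1)) ∨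
  (∃ n : ZMod 12, x = mino (n + 1) ∧ y = maj n) ∨
  (∃ n : ZMod 12, x = maj n ∧ y = mino (n + 5)) ∨
  (∃ n : ZMod 12, x = mino (n + 5) ∧ y = maj n) ∨
  (∃ n : ZMod 12, x = maj n ∧ y = aug (m4 (n + 3))) ∨
  (∃ n : ZMod 12, x = aug (m4 (n + 3)) ∧ y = maj n) ∨
  (∃ n : ZMod 12, x = mino n ∧ y = mino (n + 4)) ∨
  (∃ n : ZMod 12, x = mino n ∧ y = mino (n + 8)) ∨
  (∃ n : ZMod 12, x = mino n ∧ y = aug (m4 n)) ∨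
  (∃ n : ZMod 12, x = aug (m4 n) ∧ y = mino n)

section Monoid

variable {M : Type*} [Monoid M] {a : M} {i N : ℕ}

theorem exists_lt_pow_eq_pow (hi : i < N) (h : a ^ N = a ^ i) (n : ℕ) :
    ∃ m < N, a ^ m = a ^ n := by
  induction n using Nat.strong_induction_on with
  | _ n ih =>
    rcases lt_or_ge n N with hn | hn
    · exact ⟨n, hn, rfl⟩
    · obtain ⟨m, hm, hpow⟩ := ih (n - N + i) (by omega)
      refine ⟨m, hm, ?_⟩
      calc a ^ m = a ^ (n - N) * a ^ N := by rw [hpow, pow_add, h]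
        _ = a ^ n := by rw [← pow_add, Nat.sub_add_cancel hn]

theorem natCard_closure_singleton_of_pow_eq_pow (hinj : Set.InjOn (a ^ ·) (Set.Iio N))
    (hi : i < N) (h : a ^ N = a ^ i) : Nat.card (Submonoid.closure {a}) = N := by
  have himage : (Submonoid.powers a : Set M) = (a ^ ·) '' Set.Iio N :=
    Set.Subset.antisymm (Set.range_subset_iff.2 (exists_lt_pow_eq_pow hi h))
      (Set.image_subset_range _ _)
  rw [← Submonoid.powers_eq_closure]
  calc Nat.card (Submonoid.powers a) = ((a ^ ·) '' Set.Iio N).ncard := by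
        rw [← himage]; rfl
    _ = (Set.Iio N).ncard := hinj.ncard_image
    _ = N := by rw [← Finset.coe_Iio, Set.ncard_coe_finset, Nat.card_Iio]

end Monoid

/-- The voice-leading sum of a triad: the sum of its three pitch classes. It grades the triads by
the 12-cycle `ZMod 12` so that `Srel` only joins neighbouring grades. The three pitch classes of
`k_aug` are the preimages of `k` under `m4`, so the choice of a root among them is immaterial. -/
def voiceSum : Htriads → ZMod 12
  | Sum.inl n => n + (n + 4) + (n + 7)
  | Sum.inr (Sum.inl n) => n + (n + 3) + (n + 7)
  | Sum.inr (Sum.inr k) => k.cast + (k.cast + 4) + (k.cast + 8)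

theorem voiceSum_maj (n : ZMod 12) : voiceSum (maj n) = 3 * n - 1 := by
  revert n; decide

theorem voiceSum_mino (n : ZMod 12) : voiceSum (mino n) = 3 * n - 2 := by
  revert n; decide

theorem voiceSum_aug_m4 (n : ZMod 12) : voiceSum (aug (m4 n)) = 3 * n := by
  revert n; decide

theorem m4_surjective : Function.Surjective m4 := ZMod.castHom_surjective _

theorem m4_eq_m4_iff {a b : ZMod 12} : m4 a = m4 b ↔ 3 * a = 3 * b := by
  revert a b; decide

theorem triad_cases {motive : Htriads → Prop} (hmaj : ∀ n, motive (maj n))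
    (hmino : ∀ n, motive (mino n)) (haug : ∀ n, motive (aug (m4 n))) (x : Htriads) : motive x := by
  rcases x with n | n | k
  · exact hmaj n
  · exact hmino n
  · obtain ⟨n, rfl⟩ := m4_surjective k
    exact haug n

theorem three_mul_ne_three_mul_add_one (a b : ZMod 12) : 3 * a ≠ 3 * b + 1 := by
  revert a b; decide

theorem three_mul_ne_three_mul_add_two (a b : ZMod 12) : 3 * a ≠ 3 * b + 2 := by
  revert a b; decide

theorem three_mul_add_three (n : ZMod 12) : 3 * (n + 3) = 3 * n - 3 := by
  revert n; decide

theorem eq_aug_of_voiceSum_eq {x : Htriads} {n : ZMod 12} (h : voiceSum x = 3 * n) :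
    x = aug (m4 n) := by
  induction x using triad_cases with
  | hmaj a =>
    rw [voiceSum_maj] at h
    exact absurd (by linear_combination h) (three_mul_ne_three_mul_add_one a n)
  | hmino a =>
    rw [voiceSum_mino] at h
    exact absurd (by linear_combination h) (three_mul_ne_three_mul_add_two a n)
  | haug a =>
    rw [voiceSum_aug_m4] at h
    rw [m4_eq_m4_iff.2 h]

theorem eq_maj_of_voiceSum_eq {x : Htriads} {n : ZMod 12} (h : voiceSum x = 3 * n - 1) :
    ∃ a, x = maj a ∧ m4 a = m4 n := by
  induction x using triad_cases with
  | hmaj a =>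
    rw [voiceSum_maj] at h
    exact ⟨a, rfl, m4_eq_m4_iff.2 (by linear_combination h)⟩
  | hmino a =>
    rw [voiceSum_mino] at h
    exact absurd (by linear_combination h) (three_mul_ne_three_mul_add_one a n)
  | haug a =>
    rw [voiceSum_aug_m4] at h
    exact absurd (by linear_combination -h) (three_mul_ne_three_mul_add_one n a)

theorem eq_mino_of_voiceSum_eq {x : Htriads} {n : ZMod 12} (h : voiceSum x = 3 * n + 1) :
    ∃ a, x = mino a ∧ m4 (a + 3) = m4 n := by
  induction x using triad_cases with
  | hmaj a =>
    rw [voiceSum_maj] at h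
    exact absurd (by linear_combination h) (three_mul_ne_three_mul_add_two a n)
  | hmino a =>
    rw [voiceSum_mino] at h
    exact ⟨a, rfl, m4_eq_m4_iff.2 (by linear_combination h + three_mul_add_three a)⟩
  | haug a =>
    rw [voiceSum_aug_m4] at h
    exact absurd h (three_mul_ne_three_mul_add_one a n)

theorem Srel_maj_mino (n : ZMod 12) : Srel (maj n) (mino n) := Or.inl ⟨n, rfl, rfl⟩

theorem Srel_maj_aug (n : ZMod 12) : Srel (maj n) (aug (m4 n)) := by
  iterate 4 right
  exact Or.inl ⟨n, rfl, rfl⟩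

theorem Srel_mino_aug (n : ZMod 12) : Srel (mino n) (aug (m4 (n + 3))) := by
  iterate 6 right
  exact Or.inl ⟨n, rfl, rfl⟩

theorem Srel.symm {x y : Htriads} (h : Srel x y) : Srel y x := by
  grind (splits := 12) [Srel]

theorem Srel.voiceSum_eq {x y : Htriads} (h : Srel x y) :
    voiceSum y = voiceSum x + 1 ∨ voiceSum x = voiceSum y + 1 := by
  rcases h with ⟨n, rfl, rfl⟩ | ⟨n, rfl, rfl⟩ | ⟨n, rfl, rfl⟩ | ⟨n, rfl, rfl⟩ | ⟨n, rfl, rfl⟩ |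
    ⟨n, rfl, rfl⟩ | ⟨n, rfl, rfl⟩ | ⟨n, rfl, rfl⟩ <;>
  simp only [voiceSum_maj, voiceSum_mino, voiceSum_aug_m4] <;> revert n <;> decide

theorem exists_Srel_voiceSum_add_one (x : Htriads) :
    ∃ y, Srel x y ∧ voiceSum y = voiceSum x + 1 := by
  induction x using triad_cases with
  | hmaj n => exact ⟨_, Srel_maj_aug n, by rw [voiceSum_maj, voiceSum_aug_m4]; ring⟩
  | hmino n => exact ⟨_, (Srel_maj_mino n).symm, by rw [voiceSum_maj, voiceSum_mino]; ring⟩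
  | haug n =>
    obtain ⟨n, rfl⟩ := (Equiv.addRight (3 : ZMod 12)).surjective n
    refine ⟨_, (Srel_mino_aug n).symm, ?_⟩
    rw [voiceSum_mino, Equiv.coe_addRight, voiceSum_aug_m4, three_mul_add_three]
    ring

theorem exists_Srel_voiceSum_sub_one (x : Htriads) :
    ∃ y, Srel x y ∧ voiceSum y = voiceSum x - 1 := by
  induction x using triad_cases with
  | hmaj n => exact ⟨_, Srel_maj_mino n, by rw [voiceSum_maj, voiceSum_mino]; ring⟩
  | hmino n =>
    refine ⟨_, Srel_mino_aug n, ?_⟩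
    rw [voiceSum_mino, voiceSum_aug_m4, three_mul_add_three]
    ring
  | haug n => exact ⟨_, (Srel_maj_aug n).symm, by rw [voiceSum_maj, voiceSum_aug_m4]⟩

theorem Srel_aug_of_voiceSum_eq_add_one {n : ZMod 12} {x : Htriads}
    (h : voiceSum x = 3 * n + 1) : Srel (aug (m4 n)) x := by
  obtain ⟨a, rfl, ha⟩ := eq_mino_of_voiceSum_eq h
  exact ha ▸ (Srel_mino_aug a).symm

theorem Srel_aug_of_voiceSum_eq_sub_one {n : ZMod 12} {x : Htriads}
    (h : voiceSum x = 3 * n - 1) : Srel (aug (m4 n)) x := by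
  obtain ⟨a, rfl, ha⟩ := eq_maj_of_voiceSum_eq h
  exact ha ▸ (Srel_maj_aug a).symm

theorem exists_Srel_Srel_of_voiceSum_eq {x y : Htriads} (h : voiceSum y = voiceSum x) :
    ∃ w, Srel x w ∧ Srel w y := by
  induction x using triad_cases with
  | hmaj n =>
    rw [voiceSum_maj] at h
    exact ⟨_, Srel_maj_aug n, Srel_aug_of_voiceSum_eq_sub_one h⟩
  | hmino n =>
    rw [voiceSum_mino] at h
    exact ⟨_, Srel_mino_aug n, Srel_aug_of_voiceSum_eq_add_one
      (by linear_combination h - three_mul_add_three n)⟩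
  | haug n =>
    rw [voiceSum_aug_m4] at h
    obtain rfl := eq_aug_of_voiceSum_eq h
    exact ⟨_, (Srel_maj_aug n).symm, Srel_maj_aug n⟩

theorem exists_Srel_Srel_of_voiceSum_eq_add_two {x y : Htriads}
    (h : voiceSum y = voiceSum x + 2) : ∃ w, Srel x w ∧ Srel w y := by
  induction x using triad_cases with
  | hmaj n =>
    rw [voiceSum_maj] at h
    exact ⟨_, Srel_maj_aug n, Srel_aug_of_voiceSum_eq_add_one (by linear_combination h)⟩
  | hmino n =>
    rw [voiceSum_mino] at h
    obtain rfl : y = aug (m4 n) := eq_aug_of_voiceSum_eq (by linear_combination h)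
    exact ⟨_, (Srel_maj_mino n).symm, Srel_maj_aug n⟩
  | haug n =>
    rw [voiceSum_aug_m4] at h
    obtain ⟨w, hyw, hw⟩ := exists_Srel_voiceSum_sub_one y
    exact ⟨w, Srel_aug_of_voiceSum_eq_add_one (by linear_combination hw + h), hyw.symm⟩

theorem Srel_pow_succ_iff {n : ℕ} {x z : Htriads} :
    (Srel ^ (n + 1)) x z ↔ ∃ y, (Srel ^ n) x y ∧ Srel y z := by
  rw [pow_succ]; rfl

theorem Srel_sq_iff {x z : Htriads} : (Srel ^ 2) x z ↔ ∃ y, Srel x y ∧ Srel y z := by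
  rw [pow_two]; rfl

theorem exists_voiceSum_eq_of_Srel_pow {n : ℕ} {x y : Htriads} (h : (Srel ^ n) x y) :
    ∃ k ≤ n, voiceSum y + 2 * k = voiceSum x + n := by
  induction n generalizing y with
  | zero =>
    obtain rfl : x = y := by rwa [pow_zero] at h
    exact ⟨0, le_rfl, by simp⟩
  | succ n ih =>
    obtain ⟨w, hxw, hwy⟩ := Srel_pow_succ_iff.1 h
    obtain ⟨k, hk, hsum⟩ := ih hxw
    rcases hwy.voiceSum_eq with hup | hdown
    · exact ⟨k, by omega, by push_cast; linear_combination hup + hsum⟩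
    · exact ⟨k + 1, by omega, by push_cast; linear_combination hsum - hdown⟩

theorem Srel_sq_of_voiceSum_eq {x y : Htriads} {k : ℕ} (hk : k ≤ 2)
    (h : voiceSum y + 2 * k = voiceSum x + 2) : (Srel ^ 2) x y := by
  rw [Srel_sq_iff]
  interval_cases k
  · exact exists_Srel_Srel_of_voiceSum_eq_add_two (by linear_combination h)
  · exact exists_Srel_Srel_of_voiceSum_eq (by linear_combination h)
  · obtain ⟨w, hyw, hwx⟩ :=
      exists_Srel_Srel_of_voiceSum_eq_add_two (x := y) (y := x) (by linear_combination -h)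
    exact ⟨w, hwx.symm, hyw.symm⟩

/- In `k` of the `n` steps the voice-leading sum goes down. For `n = 1` the equivalence fails: not
every minor triad with the appropriate sum is joined to a given major triad. -/
theorem Srel_pow_iff {n : ℕ} (hn : 2 ≤ n) {x y : Htriads} :
    (Srel ^ n) x y ↔ ∃ k ≤ n, voiceSum y + 2 * k = voiceSum x + n := by
  refine ⟨exists_voiceSum_eq_of_Srel_pow, ?_⟩
  rintro ⟨k, hk, hsum⟩
  induction n, hn using Nat.le_induction generalizing k y with
  | base => exact Srel_sq_of_voiceSum_eq hk (by exact_mod_cast hsum)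
  | succ n _ ih =>
    push_cast at hsum
    rw [Srel_pow_succ_iff]
    rcases hk.lt_or_eq with hlt | rfl
    · obtain ⟨w, hyw, hw⟩ := exists_Srel_voiceSum_sub_one y
      exact ⟨w, ih k (by omega) (by linear_combination hw + hsum), hyw.symm⟩
    · obtain ⟨w, hyw, hw⟩ := exists_Srel_voiceSum_add_one y
      push_cast at hsum
      exact ⟨w, ih n le_rfl (by linear_combination hw + hsum), hyw.symm⟩

theorem exists_Srel_pow_voiceSum_eq_add (n : ℕ) (x : Htriads) :
    ∃ y, (Srel ^ n) x y ∧ voiceSum y = voiceSum x + n := by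
  induction n with
  | zero => exact ⟨x, by rw [pow_zero]; rfl, by simp⟩
  | succ n ih =>
    obtain ⟨w, hxw, hw⟩ := ih
    obtain ⟨y, hwy, hy⟩ := exists_Srel_voiceSum_add_one w
    exact ⟨y, Srel_pow_succ_iff.2 ⟨w, hxw, hwy⟩, by push_cast; linear_combination hy + hw⟩

theorem Srel_pow_ne_of_lt {m n : ℕ} (hmn : m < n) (hn : n ≤ 6) : Srel ^ m ≠ Srel ^ n := by
  intro heq
  obtain ⟨y, hreach, hy⟩ := exists_Srel_pow_voiceSum_eq_add n (aug 0)
  obtain ⟨k, hk, hsum⟩ := exists_voiceSum_eq_of_Srel_pow (heq ▸ hreach)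
  have hmod : ((n + 2 * k : ℕ) : ZMod 12) = (m : ℕ) := by
    push_cast
    linear_combination hsum - hy
  rw [ZMod.natCast_eq_natCast_iff'] at hmod
  omega

theorem Srel_pow_injOn : Set.InjOn (Srel ^ ·) (Set.Iio 7) := by
  intro m hm n hn heq
  rw [Set.mem_Iio] at hm hn
  rcases lt_trichotomy m n with hmn | hmn | hmn
  · exact absurd heq (Srel_pow_ne_of_lt hmn (by omega))
  · exact hmn
  · exact absurd heq.symm (Srel_pow_ne_of_lt hmn (by omega))

theorem exists_add_two_mul_eq_seven_iff (d : ZMod 12) :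
    (∃ k ≤ 7, d + 2 * (k : ℕ) = 7) ↔ ∃ k ≤ 5, d + 2 * (k : ℕ) = 5 := by
  revert d; decide

theorem Srel_pow_seven : Srel ^ 7 = Srel ^ 5 := by
  ext x y
  rw [Srel_pow_iff (by norm_num), Srel_pow_iff (by norm_num)]
  have h := exists_add_two_mul_eq_seven_iff (voiceSum y - voiceSum x)
  simpa only [sub_add_eq_add_sub, sub_eq_iff_eq_add', Nat.cast_ofNat] using h

/-- the submonoid generated by `S` has exactly 7 elements; equivalently,
`1, S, S², S³, S⁴, S⁵, S⁶` are pairwise distinct and `S⁷ = S⁵`. -/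
theorem stmt12 :
    Nat.card (Submonoid.closure ({Srel} : Set MRel)) = 7 ∧
    ([1, Srel, Srel ^ 2, Srel ^ 3, Srel ^ 4, Srel ^ 5, Srel ^ 6] : List MRel).Pairwise (· ≠ ·) ∧
    Srel ^ 7 = Srel ^ 5 := by
  refine ⟨natCard_closure_singleton_of_pow_eq_pow Srel_pow_injOn (by norm_num) Srel_pow_seven,
    ?_, Srel_pow_seven⟩
  have hpairwise : ((List.range 7).map (Srel ^ ·)).Pairwise (· ≠ ·) :=
    List.pairwise_map.2 (List.pairwise_lt_range.imp_of_mem fun _ hn hmn ↦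
      Srel_pow_ne_of_lt hmn (Nat.le_of_lt_succ (List.mem_range.1 hn)))
  simpa [List.range_succ] using hpairwise
end

section
/- Let T be Douthett's parsimonious relation P_{2,0} on the 28-element set H of major, minor, and augmented triads. In the monoid of binary relations on H under relational composition, T⁴ = T³. -/
/-!
The relation `𝒯` moves two voices by a semitone each, so it preserves the parity of the sum of
the three pitch classes of a triad. Conversely, an augmented triad reaches every major or minor
triad of the same parity in exactly two steps; since every major or minor triad is adjacent to an
augmented one, and every triad is adjacent to a major or minor one, `𝒯³` relates all triads of
equal parity. So `𝒯³` is an equivalence relation containing the left-total relation `𝒯`, and such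
a relation is unchanged by composing with `𝒯` once more.
-/

theorem comp_setoid_eq_of_le {α : Type*} {r : α → α → Prop} {s : Setoid α}
    (total : Relator.LeftTotal r) (le : ∀ {x y}, r x y → s x y) : Relation.Comp r s = s := by
  ext x z
  constructor
  · rintro ⟨y, hxy, hyz⟩
    exact s.trans (le hxy) hyz
  · intro hxz
    obtain ⟨y, hxy⟩ := total x
    exact ⟨y, hxy, s.trans (s.symm (le hxy)) hxz⟩

theorem comp_self_symm {α : Type*} {r : α → α → Prop} (symm : ∀ {x y}, r x y → r y x) {x y : α} :
    Relation.Comp r r x y → Relation.Comp r r y x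
  | ⟨z, hxz, hzy⟩ => ⟨z, symm hzy, symm hxz⟩

theorem mRel_mul_eq_comp (r s : MRel) : r * s = Relation.Comp r s := rfl

theorem trel_maj_maj_add_four (n : ZMod 12) : Trel (maj n) (maj (n + 4)) :=
  .inl ⟨n, rfl, rfl⟩

theorem trel_maj_mino_add_one (n : ZMod 12) : Trel (maj n) (mino (n + 1)) := by
  simp [Trel, maj, mino, aug]

theorem trel_maj_aug (n : ZMod 12) : Trel (maj n) (aug (m4 (n + 3))) := by
  simp [Trel, maj, mino, aug]

theorem trel_mino_mino_add_four (n : ZMod 12) : Trel (mino n) (mino (n + 4)) := by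
  simp [Trel, maj, mino, aug]

theorem trel_mino_aug (n : ZMod 12) : Trel (mino n) (aug (m4 n)) := by
  simp [Trel, maj, mino, aug]

theorem trel_symm {x y : Htriads} (h : Trel x y) : Trel y x := by
  have add_four_add_eight (n : ZMod 12) : n + 4 + 8 = n := by decide +revert
  have add_eight_add_four (n : ZMod 12) : n + 8 + 4 = n := by decide +revert
  rcases h with h | h | h | h | h | h | h | h | h | h | h | h <;>
    obtain ⟨n, rfl, rfl⟩ := h <;>
    simp [Trel, maj, mino, aug, add_four_add_eight, add_eight_add_four]

/-- The sum of the three pitch classes of a triad, with `n_M = {n, n + 4, n + 7}`,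
`n_m = {n, n + 3, n + 7}` and `k_aug = {k, k + 4, k + 8}`. It serves to define the invariant
`pitchSumParity`. The cast picks the representative of `k` in `{0, 1, 2, 3}`; another choice of
representative would only permute the three pitch classes. -/
def pitchSum : Htriads → ZMod 12
  | .inl n => n + (n + 4) + (n + 7)
  | .inr (.inl n) => n + (n + 3) + (n + 7)
  | .inr (.inr k) => k.cast + (k.cast + 4) + (k.cast + 8)

/-- The parity of the sum of the pitch classes of a triad; its two fibres turn out to be the
classes of `𝒯³`. -/
def pitchSumParity (x : Htriads) : ZMod 2 :=
  ZMod.castHom (show 2 ∣ 12 by norm_num) (ZMod 2) (pitchSum x)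

theorem pitchSum_sub_of_trel {x y : Htriads} (h : Trel x y) :
    pitchSum y - pitchSum x = 0 ∨ pitchSum y - pitchSum x = 2 ∨ pitchSum y - pitchSum x = -2 := by
  rcases h with h | h | h | h | h | h | h | h | h | h | h | h <;>
    obtain ⟨n, rfl, rfl⟩ := h <;> decide +revert

theorem pitchSumParity_eq_of_trel {x y : Htriads} (h : Trel x y) :
    pitchSumParity x = pitchSumParity y := by
  rw [eq_comm, ← sub_eq_zero, pitchSumParity, pitchSumParity, ← map_sub]
  rcases pitchSum_sub_of_trel h with h | h | h <;> rw [h] <;> rfl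

/-- The consonant triads: the major and minor ones, as opposed to the augmented ones. Each is
reached in exactly two steps of `𝒯` from every augmented triad of the same parity. -/
inductive IsConsonant : Htriads → Prop
  | maj (n : ZMod 12) : IsConsonant (maj n)
  | mino (n : ZMod 12) : IsConsonant (mino n)

theorem isConsonant_or_eq_aug (x : Htriads) : IsConsonant x ∨ ∃ k, x = aug k := by
  rcases x with n | n | k
  · exact .inl (.maj n)
  · exact .inl (.mino n)
  · exact .inr ⟨k, rfl⟩

theorem IsConsonant.exists_trel_aug {x : Htriads} (hx : IsConsonant x) : ∃ k, Trel x (aug k) := by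
  rcases hx with n | n
  · exact ⟨_, trel_maj_aug n⟩
  · exact ⟨_, trel_mino_aug n⟩

theorem exists_isConsonant_trel (x : Htriads) : ∃ y, IsConsonant y ∧ Trel x y := by
  rcases x with n | n | k
  · exact ⟨_, .maj _, trel_maj_maj_add_four n⟩
  · exact ⟨_, .mino _, trel_mino_mino_add_four n⟩
  · obtain ⟨n, rfl⟩ : ∃ n, m4 n = k := ZMod.castHom_surjective _ k
    exact ⟨_, .mino n, trel_symm (trel_mino_aug n)⟩

theorem leftTotal_trel : Relator.LeftTotal Trel := fun x =>
  let ⟨y, _, hxy⟩ := exists_isConsonant_trel x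
  ⟨y, hxy⟩

theorem m4_add_four (n : ZMod 12) : m4 (n + 4) = m4 n := by
  decide +revert

theorem eq_m4_of_pitchSumParity_aug_eq_maj {k : ZMod 4} {n : ZMod 12}
    (h : pitchSumParity (aug k) = pitchSumParity (maj n)) : k = m4 (n + 1) ∨ k = m4 (n + 3) := by
  decide +revert

theorem eq_m4_of_pitchSumParity_aug_eq_mino {k : ZMod 4} {n : ZMod 12}
    (h : pitchSumParity (aug k) = pitchSumParity (mino n)) : k = m4 n ∨ k = m4 (n + 2) := by
  decide +revert

theorem comp_trel_trel_aug_of_isConsonant {k : ZMod 4} {x : Htriads} (hx : IsConsonant x)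
    (h : pitchSumParity (aug k) = pitchSumParity x) : Relation.Comp Trel Trel (aug k) x := by
  rcases hx with n | n
  · rcases eq_m4_of_pitchSumParity_aug_eq_maj h with rfl | rfl
    · exact ⟨mino (n + 1), trel_symm (trel_mino_aug _), trel_symm (trel_maj_mino_add_one n)⟩
    · refine ⟨maj (n + 4), ?_, trel_symm (trel_maj_maj_add_four n)⟩
      rw [← m4_add_four, add_right_comm]
      exact trel_symm (trel_maj_aug (n + 4))
  · rcases eq_m4_of_pitchSumParity_aug_eq_mino h with rfl | rfl
    · refine ⟨mino (n + 4), ?_, trel_symm (trel_mino_mino_add_four n)⟩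
      rw [← m4_add_four]
      exact trel_symm (trel_mino_aug (n + 4))
    · refine ⟨maj (n - 1), ?_, ?_⟩
      · rw [show n + 2 = n - 1 + 3 by ring]
        exact trel_symm (trel_maj_aug (n - 1))
      · simpa only [sub_add_cancel] using trel_maj_mino_add_one (n - 1)

theorem trel_pow_three_of_pitchSumParity_eq {x y : Htriads}
    (h : pitchSumParity x = pitchSumParity y) : (Trel ^ 3) x y := by
  rcases isConsonant_or_eq_aug y with hy | ⟨k, rfl⟩
  · rcases isConsonant_or_eq_aug x with hx | ⟨k, rfl⟩
    · obtain ⟨k, hxk⟩ := hx.exists_trel_aug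
      have hky := comp_trel_trel_aug_of_isConsonant hy
        ((pitchSumParity_eq_of_trel hxk).symm.trans h)
      rw [pow_three]
      exact ⟨aug k, hxk, hky⟩
    · obtain ⟨z, hz, hyz⟩ := exists_isConsonant_trel y
      have hkz := comp_trel_trel_aug_of_isConsonant hz (h.trans (pitchSumParity_eq_of_trel hyz))
      rw [pow_three']
      exact ⟨z, hkz, trel_symm hyz⟩
  · obtain ⟨z, hz, hxz⟩ := exists_isConsonant_trel x
    have hkz := comp_trel_trel_aug_of_isConsonant hz (h.symm.trans (pitchSumParity_eq_of_trel hxz))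
    rw [pow_three]
    exact ⟨z, hxz, comp_self_symm trel_symm hkz⟩

theorem trel_pow_three_eq_ker : Trel ^ 3 = Setoid.ker pitchSumParity := by
  ext x y
  refine ⟨fun h => ?_, trel_pow_three_of_pitchSumParity_eq⟩
  rw [pow_three] at h
  obtain ⟨a, hxa, b, hab, hby⟩ := h
  exact (pitchSumParity_eq_of_trel hxa).trans <|
    (pitchSumParity_eq_of_trel hab).trans (pitchSumParity_eq_of_trel hby)

/-- `T⁴ = T³` in the monoid of relations on `Htriads`. -/
theorem stmt13 : Trel ^ 4 = Trel ^ 3 := by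
  calc
    Trel ^ 4 = Relation.Comp Trel (Trel ^ 3) := by rw [pow_succ', mRel_mul_eq_comp]
    _ = Relation.Comp Trel (Setoid.ker pitchSumParity) := by rw [trel_pow_three_eq_ker]
    _ = Setoid.ker pitchSumParity := comp_setoid_eq_of_le leftTotal_trel pitchSumParity_eq_of_trel
    _ = Trel ^ 3 := trel_pow_three_eq_ker.symm
end
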